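/- (Lemma: differential ε-deflatability implies ε-deflatability.) Let ξ : X → Z be a reaction coordinate with a disintegration family (μ_z), and suppose the system is differentially ε-deflatable with respect to ξ and (μ_z), i.e. (1/|Z|) ∫_Z ∫∫ (∫_X |p(x,y₁)/π(y₁) − p(x,y₂)/π(y₂)| dμ(x)) dμ_z(y₁) dμ_z(y₂) dz ≤ ε. Define p_D : X × Z → [0,∞) by p_D(x,z) := ∫ p(x,y')/π(y') dμ_z(y'). Then the system is ε-deflatable with respect to ξ and p_D, i.e. (1/|Z|) ∫_X (∫_X |p(x,y) − p_D(x,ξ(y))π(y)| dy) dμ(x) ≤ ε. -/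

import Mathlib

open MeasureTheory ProbabilityTheory
open scoped ENNReal

section Auxiliary

variable {α β : Type*} [MeasurableSpace α] [MeasurableSpace β]

/-- A family of probability measures on a countably generated space whose evaluations are almost
everywhere measurable agrees almost everywhere with a Markov kernel. -/
theorem exists_isMarkovKernel_ae_eq [MeasurableSpace.CountablyGenerated β] [Nonempty β]
    {ρ : Measure α} {ν : α → Measure β} (hprob : ∀ᵐ z ∂ρ, IsProbabilityMeasure (ν z))
    (hν : ∀ s, MeasurableSet s → AEMeasurable (fun z => ν z s) ρ) :
    ∃ κ : Kernel α β, IsMarkovKernel κ ∧ ∀ᵐ z ∂ρ, ν z = κ z := by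
  classical
  obtain ⟨y₀⟩ := ‹Nonempty β›
  set C : Set (Set β) :=
    generateSetAlgebra (MeasurableSpace.countableGeneratingSet β) with hC
  have hCgen : ‹MeasurableSpace β› = MeasurableSpace.generateFrom C := by
    rw [hC, generateFrom_generateSetAlgebra_eq,
      MeasurableSpace.generateFrom_countableGeneratingSet]
  have hCpi : IsPiSystem C := fun s hs t ht _ =>
    isSetAlgebra_generateSetAlgebra.inter_mem hs ht
  have hCmeas : ∀ s ∈ C, MeasurableSet s := fun s hs => by
    rw [hCgen]; exact MeasurableSpace.measurableSet_generateFrom hs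
  have hCcount : C.Countable :=
    countable_generateSetAlgebra MeasurableSpace.countable_countableGeneratingSet
  have hgood : ∀ᵐ z ∂ρ, IsProbabilityMeasure (ν z) ∧
      ∀ s, ∀ hs : s ∈ C, ν z s = (hν s (hCmeas s hs)).mk _ z := by
    refine hprob.and ?_
    exact (ae_ball_iff hCcount).2 fun s hs => (hν s (hCmeas s hs)).ae_eq_mk
  obtain ⟨G, hGsub, hGmeas, hGnull⟩ := hgood.exists_measurable_mem
  have hprob' : ∀ z, IsProbabilityMeasure (if z ∈ G then ν z else Measure.dirac y₀) := by
    intro z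
    split_ifs with hz
    · exact (hGnull z hz).1
    · infer_instance
  have hmeas : Measurable fun z => if z ∈ G then ν z else Measure.dirac y₀ := by
    refine Measurable.measure_of_isPiSystem_of_isProbabilityMeasure hCgen hCpi fun s hs => ?_
    have : (fun z => (if z ∈ G then ν z else Measure.dirac y₀) s) =
        fun z => if z ∈ G then (hν s (hCmeas s hs)).mk _ z else Measure.dirac y₀ s := by
      funext z
      split_ifs with hz
      · exact (hGnull z hz).2 s hs
      · rfl
    rw [this]
    exact Measurable.ite hGmeas (hν s (hCmeas s hs)).measurable_mk measurable_const
  refine ⟨⟨_, hmeas⟩, ⟨hprob'⟩, ?_⟩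
  filter_upwards [hGsub] with z hz
  change ν z = if z ∈ G then ν z else Measure.dirac y₀
  rw [if_pos hz]

/-- If the Bochner integrals of the evaluations of a family of probability measures recover a
probability measure, then the evaluations are almost everywhere measurable. -/
theorem aemeasurable_apply_of_integral_real_eq {ρ : Measure α}
    {ν : α → Measure β} {μ : Measure β} [IsProbabilityMeasure μ]
    (hprob : ∀ᵐ z ∂ρ, IsProbabilityMeasure (ν z))
    (hν : ∀ s, MeasurableSet s → ∫ z, (ν z).real s ∂ρ = μ.real s)
    {s : Set β} (hs : MeasurableSet s) : AEMeasurable (fun z => ν z s) ρ := by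
  have aux : ∀ t, MeasurableSet t → μ.real t ≠ 0 → AEMeasurable (fun z => ν z t) ρ := by
    intro t ht ht0
    have hint : Integrable (fun z => (ν z).real t) ρ :=
      .of_integral_ne_zero (by rwa [hν t ht])
    refine hint.aemeasurable.ennreal_ofReal.congr ?_
    filter_upwards [hprob] with z hz
    exact ofReal_measureReal
  by_cases h0 : μ.real s = 0
  · have hc : μ.real sᶜ ≠ 0 := by simp [probReal_compl_eq_one_sub hs, h0]
    refine ((aux _ hs.compl hc).const_sub 1).congr ?_
    filter_upwards [hprob] with z hz
    rw [← prob_compl_eq_one_sub hs.compl, compl_compl]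
  · exact aux s hs h0

/-- A Markov kernel whose Bochner-integrated evaluations recover a finite measure disintegrates
that measure. -/
theorem bind_eq_of_integral_real_eq {ρ : Measure α} [IsFiniteMeasure ρ] {κ : Kernel α β}
    [IsMarkovKernel κ] {μ : Measure β} [IsFiniteMeasure μ]
    (hκ : ∀ s, MeasurableSet s → ∫ z, (κ z).real s ∂ρ = μ.real s) : ρ.bind κ = μ := by
  ext s hs
  rw [Measure.bind_apply hs κ.aemeasurable, ← ENNReal.toReal_eq_toReal_iff', ← measureReal_def,
    ← hκ s hs]
  · exact (integral_toReal (κ.measurable_coe hs).aemeasurable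
      (ae_of_all _ fun z => measure_lt_top _ _)).symm
  · refine ((lintegral_mono fun z => prob_le_one).trans_lt ?_).ne
    · simp
  · exact measure_ne_top _ _

theorem enorm_sub_integral_le_lintegral_enorm_sub {μ : Measure α} [IsProbabilityMeasure μ]
    {f : α → ℝ} (hf : AEStronglyMeasurable f μ) (c : ℝ) :
    ‖c - ∫ y, f y ∂μ‖ₑ ≤ ∫⁻ y, ‖c - f y‖ₑ ∂μ := by
  by_cases hint : Integrable f μ
  · have : c - ∫ y, f y ∂μ = ∫ y, (c - f y) ∂μ := by
      rw [integral_sub (integrable_const c) hint]; simp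
    rw [this]
    exact enorm_integral_le_lintegral_enorm _
  · have : ∫⁻ y, ‖c - f y‖ₑ ∂μ = ∞ := by
      by_contra hfin
      have hcf : Integrable (fun y => c - f y) μ :=
        ⟨aestronglyMeasurable_const.sub hf, lt_top_iff_ne_top.2 hfin⟩
      exact hint (((integrable_const c).sub hcf).congr
        (ae_of_all _ fun y => sub_sub_cancel c (f y)))
    simp [this]

/-- If almost every measure of a disintegration lives on the fibre of `ξ`, then a property holding
almost everywhere on the base holds almost everywhere along `ξ`. -/
theorem ae_comp_of_ae_bind {ρ : Measure α} {κ : Kernel α β} {ξ : β → α}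
    (hξ : Measurable ξ) (hfib : ∀ᵐ z ∂ρ, ∀ᵐ y ∂κ z, ξ y = z) {P : α → Prop}
    (hP : ∀ᵐ z ∂ρ, P z) : ∀ᵐ y ∂ρ.bind κ, P (ξ y) := by
  obtain ⟨G, hGsub, hGmeas, hG⟩ := hP.exists_measurable_mem
  have hnull : ρ.bind κ (ξ ⁻¹' Gᶜ) = 0 := by
    rw [Measure.bind_apply (hξ hGmeas.compl) κ.aemeasurable]
    refine (lintegral_congr_ae ?_).trans lintegral_zero
    filter_upwards [hfib, hGsub] with z hz hzG
    have : ∀ᵐ y ∂κ z, y ∉ ξ ⁻¹' Gᶜ := by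
      filter_upwards [hz] with y hy
      simpa [hy] using hzG
    exact measure_eq_zero_iff_ae_notMem.2 this
  filter_upwards [measure_eq_zero_iff_ae_notMem.1 hnull] with y hy
  exact hG _ (by simpa using hy)

variable {q : β → β → ℝ}

/-- Averaging over fibres: the deviation of `q` from its fibrewise mean is controlled by the mean
fibrewise oscillation. -/
theorem lintegral_enorm_sub_integral_le {ρ : Measure α} [SFinite ρ] {κ : Kernel α β}
    [IsMarkovKernel κ] {μ : Measure β} [SFinite μ] (hbind : ρ.bind κ = μ) {ξ : β → α}
    (hξ : Measurable ξ) (hfib : ∀ᵐ z ∂ρ, ∀ᵐ y ∂κ z, ξ y = z)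
    (hq : Measurable (Function.uncurry q)) :
    ∫⁻ x, ∫⁻ y, ‖q x y - ∫ y', q x y' ∂κ (ξ y)‖ₑ ∂μ ∂μ ≤
      ∫⁻ z, ∫⁻ y₂, ∫⁻ y₁, ∫⁻ x, ‖q x y₁ - q x y₂‖ₑ ∂μ ∂κ z ∂κ z ∂ρ := by
  have hqx : ∀ x, Measurable (q x) := fun x => hq.comp measurable_prodMk_left
  have hI : Measurable fun t : (β × β) × α => ∫⁻ y₁, ‖q t.1.1 y₁ - q t.1.1 t.1.2‖ₑ ∂κ t.2 := by
    have h : Measurable fun s : ((β × β) × α) × β =>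
        ‖q s.1.1.1 s.2 - q s.1.1.1 s.1.1.2‖ₑ := by
      have h1 : Measurable fun s : ((β × β) × α) × β => q s.1.1.1 s.2 :=
        hq.comp (measurable_fst.fst.fst.prodMk measurable_snd)
      have h2 : Measurable fun s : ((β × β) × α) × β => q s.1.1.1 s.1.1.2 :=
        hq.comp measurable_fst.fst
      exact (h1.sub h2).enorm
    exact h.lintegral_kernel_prod_right' (κ := κ.comap Prod.snd measurable_snd)
  calc ∫⁻ x, ∫⁻ y, ‖q x y - ∫ y', q x y' ∂κ (ξ y)‖ₑ ∂μ ∂μ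
      ≤ ∫⁻ x, ∫⁻ y₂, ∫⁻ y₁, ‖q x y₁ - q x y₂‖ₑ ∂κ (ξ y₂) ∂μ ∂μ := by
        refine lintegral_mono fun x => lintegral_mono fun y => ?_
        refine (enorm_sub_integral_le_lintegral_enorm_sub
          (hqx x).aestronglyMeasurable (q x y)).trans_eq ?_
        exact lintegral_congr fun y' => enorm_sub_rev _ _
    _ = ∫⁻ x, ∫⁻ z, ∫⁻ y₂, ∫⁻ y₁, ‖q x y₁ - q x y₂‖ₑ ∂κ z ∂κ z ∂ρ ∂μ := by
        refine lintegral_congr fun x => ?_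
        have hm : Measurable fun y₂ => ∫⁻ y₁, ‖q x y₁ - q x y₂‖ₑ ∂κ (ξ y₂) :=
          hI.comp ((measurable_const.prodMk measurable_id).prodMk hξ)
        conv_lhs => rw [← hbind]
        rw [Measure.lintegral_bind κ.aemeasurable hm.aemeasurable]
        refine lintegral_congr_ae ?_
        filter_upwards [hfib] with z hz
        refine lintegral_congr_ae ?_
        filter_upwards [hz] with y hy
        rw [hy]
    _ = ∫⁻ z, ∫⁻ x, ∫⁻ y₂, ∫⁻ y₁, ‖q x y₁ - q x y₂‖ₑ ∂κ z ∂κ z ∂μ ∂ρ := by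
        refine lintegral_lintegral_swap (Measurable.aemeasurable ?_)
        have h : Measurable fun s : (β × α) × β =>
            ∫⁻ y₁, ‖q s.1.1 y₁ - q s.1.1 s.2‖ₑ ∂κ s.1.2 :=
          hI.comp ((measurable_fst.fst.prodMk measurable_snd).prodMk measurable_fst.snd)
        exact h.lintegral_kernel_prod_right' (κ := κ.comap Prod.snd measurable_snd)
    _ = ∫⁻ z, ∫⁻ y₂, ∫⁻ y₁, ∫⁻ x, ‖q x y₁ - q x y₂‖ₑ ∂μ ∂κ z ∂κ z ∂ρ := by
        refine lintegral_congr fun z => ?_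
        rw [lintegral_lintegral_swap (Measurable.aemeasurable ?_)]
        · refine lintegral_congr fun y₂ => lintegral_lintegral_swap (Measurable.aemeasurable ?_)
          exact (hq.sub (hq.comp (measurable_fst.prodMk measurable_const))).enorm
        · exact hI.comp (measurable_id.prodMk measurable_const)

theorem measurable_lintegral_enorm_sub {μ : Measure β} [SFinite μ]
    (hq : Measurable (Function.uncurry q)) :
    Measurable fun t : β × β => ∫⁻ x, ‖q x t.2 - q x t.1‖ₑ ∂μ := by
  have h1 : Measurable fun s : (β × β) × β => q s.2 s.1.2 :=
    hq.comp (measurable_snd.prodMk measurable_fst.snd)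
  have h2 : Measurable fun s : (β × β) × β => q s.2 s.1.1 :=
    hq.comp (measurable_snd.prodMk measurable_fst.fst)
  exact (h1.sub h2).enorm.lintegral_prod_right'

theorem measurable_lintegral_kernel_lintegral_enorm_sub {κ : Kernel α β} [IsSFiniteKernel κ]
    {μ : Measure β} [SFinite μ] (hq : Measurable (Function.uncurry q)) :
    Measurable fun t : α × β => ∫⁻ y₁, ∫⁻ x, ‖q x y₁ - q x t.2‖ₑ ∂μ ∂κ t.1 := by
  have h : Measurable fun s : (α × β) × β => ∫⁻ x, ‖q x s.2 - q x s.1.2‖ₑ ∂μ :=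
    (measurable_lintegral_enorm_sub hq).comp (measurable_fst.snd.prodMk measurable_snd)
  exact h.lintegral_kernel_prod_right' (κ := κ.comap Prod.fst measurable_fst)

theorem lintegral_oscillation_le {ρ : Measure α} {κ : Kernel α β}
    [IsMarkovKernel κ] {μ : Measure β} [SFinite μ] (hbind : ρ.bind κ = μ)
    (hq : Measurable (Function.uncurry q)) :
    ∫⁻ z, ∫⁻ y₂, ∫⁻ y₁, ∫⁻ x, ‖q x y₁ - q x y₂‖ₑ ∂μ ∂κ z ∂κ z ∂ρ ≤
      2 * ∫⁻ x, ∫⁻ y, ‖q x y‖ₑ ∂μ ∂μ := by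
  have hg : Measurable fun y => ∫⁻ x, ‖q x y‖ₑ ∂μ := hq.enorm.lintegral_prod_left'
  have hqy : ∀ y, Measurable fun x => q x y := fun y => hq.comp measurable_prodMk_right
  have hswap : ∫⁻ z, ∫⁻ y, ∫⁻ x, ‖q x y‖ₑ ∂μ ∂κ z ∂ρ = ∫⁻ x, ∫⁻ y, ‖q x y‖ₑ ∂μ ∂μ := by
    rw [lintegral_lintegral_swap hq.enorm.aemeasurable, ← Measure.lintegral_bind κ.aemeasurable
      hg.aemeasurable, hbind]
  calc _ ≤ ∫⁻ z, ∫⁻ y₂, ∫⁻ y₁, (∫⁻ x, ‖q x y₁‖ₑ ∂μ + ∫⁻ x, ‖q x y₂‖ₑ ∂μ) ∂κ z ∂κ z ∂ρ := by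
        refine lintegral_mono fun z => lintegral_mono fun y₂ => lintegral_mono fun y₁ => ?_
        dsimp only
        rw [← lintegral_add_left (hqy y₁).enorm]
        exact lintegral_mono fun x => enorm_sub_le
    _ = ∫⁻ z, 2 * ∫⁻ y, ∫⁻ x, ‖q x y‖ₑ ∂μ ∂κ z ∂ρ := by
        refine lintegral_congr fun z => ?_
        simp_rw [lintegral_add_left hg, lintegral_const, measure_univ, mul_one]
        simp [lintegral_add_left, two_mul]
    _ = 2 * ∫⁻ x, ∫⁻ y, ‖q x y‖ₑ ∂μ ∂μ := by
        rw [lintegral_const_mul _ hg.lintegral_kernel, hswap]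

/-- The iterated Bochner integral of the oscillation agrees with its Lebesgue counterpart when
the latter is finite. -/
theorem integral_toReal_oscillation_eq {ρ : Measure α} {κ : Kernel α β}
    [IsMarkovKernel κ] {μ : Measure β} [SFinite μ] (hq : Measurable (Function.uncurry q))
    (hfin : ∫⁻ z, ∫⁻ y₂, ∫⁻ y₁, ∫⁻ x, ‖q x y₁ - q x y₂‖ₑ ∂μ ∂κ z ∂κ z ∂ρ ≠ ∞) :
    ∫ z, ∫ y₂, ∫ y₁, (∫⁻ x, ‖q x y₁ - q x y₂‖ₑ ∂μ).toReal ∂κ z ∂κ z ∂ρ =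
      (∫⁻ z, ∫⁻ y₂, ∫⁻ y₁, ∫⁻ x, ‖q x y₁ - q x y₂‖ₑ ∂μ ∂κ z ∂κ z ∂ρ).toReal := by
  have hF2 := measurable_lintegral_kernel_lintegral_enorm_sub (κ := κ) (μ := μ) hq
  have hF2z : ∀ z, Measurable fun y₂ => ∫⁻ y₁, ∫⁻ x, ‖q x y₁ - q x y₂‖ₑ ∂μ ∂κ z :=
    fun z => hF2.comp measurable_prodMk_left
  have hF3 : ∀ y₂, Measurable fun y₁ => ∫⁻ x, ‖q x y₁ - q x y₂‖ₑ ∂μ :=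
    fun y₂ => (measurable_lintegral_enorm_sub hq).comp measurable_prodMk_left
  have hF1 : Measurable fun z => ∫⁻ y₂, ∫⁻ y₁, ∫⁻ x, ‖q x y₁ - q x y₂‖ₑ ∂μ ∂κ z ∂κ z :=
    hF2.lintegral_kernel_prod_right'
  have hfin1 := ae_lt_top hF1 hfin
  rw [← integral_toReal hF1.aemeasurable hfin1]
  refine integral_congr_ae ?_
  filter_upwards [hfin1] with z hz
  have hfin2 := ae_lt_top (hF2z z) hz.ne
  rw [← integral_toReal (hF2z z).aemeasurable hfin2]
  refine integral_congr_ae ?_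
  filter_upwards [hfin2] with y₂ hy₂
  exact integral_toReal (hF3 y₂).aemeasurable (ae_lt_top (hF3 y₂) hy₂.ne)

end Auxiliary

/-- (Differential ε-deflatability implies ε-deflatability,
with `p_D(x,z) := ∫ p(x,y')/π(y') dμ_z(y')`.) -/
theorem differentially_deflatable_implies_deflatable
    {n r : ℕ} (X : Set (Fin n → ℝ)) (hX : MeasurableSet X)
    (Z : Set (Fin r → ℝ)) (hZ : MeasurableSet Z)
    (hZpos : 0 < volume Z) (hZfin : volume Z < ⊤)
    (π : (Fin n → ℝ) → ℝ) (hπmeas : Measurable π) (hπcont : ContinuousOn π X)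
    (hπpos : ∀ x ∈ X, 0 < π x) (hπbdd : BddAbove (π '' X))
    (hπprob : ∫ x in X, π x = 1)
    (p : (Fin n → ℝ) → (Fin n → ℝ) → ℝ)
    (hpmeas : Measurable (Function.uncurry p))
    (hpnonneg : ∀ x y, 0 ≤ p x y)
    (hpnorm : ∀ x ∈ X, ∫ y in X, p x y = 1)
    (ξ : (Fin n → ℝ) → Fin r → ℝ) (hξmeas : Measurable ξ) (hξmap : ∀ x ∈ X, ξ x ∈ Z)
    -- disintegration family (μ_z) for ξ
    (ν : (Fin r → ℝ) → Measure (Fin n → ℝ))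
    (hνprob : ∀ z ∈ Z, IsProbabilityMeasure (ν z))
    (hνconc : ∀ z ∈ Z, ν z {x | ξ x ≠ z} = 0)
    (hνdis : ∀ h : (Fin n → ℝ) → ℝ, IntegrableOn (fun x => h x * π x) X →
      ∫ z in Z, ∫ x, h x ∂ν z = ∫ x in X, h x * π x)
    (ε : ℝ) (hε : 0 ≤ ε)
    -- differential ε-deflatability with respect to ξ and (μ_z)
    (hdiff : (volume Z).toReal⁻¹ *
      ∫ z in Z, ∫ y₂, ∫ y₁,
        (∫ x in X, |p x y₁ / π y₁ - p x y₂ / π y₂| * π x) ∂ν z ∂ν z ≤ ε) :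
    -- ε-deflatability with respect to ξ and p_D(x,z) := ∫ p(x,y')/π(y') dμ_z(y')
    (volume Z).toReal⁻¹ *
      ∫ x in X, (∫ y in X, |p x y - (∫ y', p x y' / π y' ∂ν (ξ y)) * π y|) * π x ≤ ε := by
  set ρ : Measure (Fin r → ℝ) := volume.restrict Z with hρ
  set μ : Measure (Fin n → ℝ) :=
    (volume.restrict X).withDensity fun x => ENNReal.ofReal (π x) with hμ
  have hπX : ∀ᵐ x ∂volume.restrict X, 0 < π x :=
    (ae_restrict_iff' hX).2 (ae_of_all _ hπpos)
  have hπint : IntegrableOn π X := integrable_of_integral_eq_one hπprob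
  have hlint : ∀ f : (Fin n → ℝ) → ℝ≥0∞,
      ∫⁻ x, f x ∂μ = ∫⁻ x in X, ENNReal.ofReal (π x) * f x := fun f =>
    lintegral_withDensity_eq_lintegral_mul_non_measurable _ hπmeas.ennreal_ofReal
      (ae_of_all _ fun _ => ENNReal.ofReal_lt_top) f
  have hμprob : IsProbabilityMeasure μ := by
    refine ⟨?_⟩
    rw [hμ, withDensity_apply _ MeasurableSet.univ, Measure.restrict_univ,
      ← ofReal_integral_eq_lintegral_ofReal hπint (hπX.mono fun _ h => h.le), hπprob,
      ENNReal.ofReal_one]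
  have hρfin : IsFiniteMeasure ρ := ⟨by simpa [hρ] using hZfin⟩
  have hνprob' : ∀ᵐ z ∂ρ, IsProbabilityMeasure (ν z) :=
    (ae_restrict_iff' hZ).2 (ae_of_all _ hνprob)
  have hreal : ∀ s, MeasurableSet s → ∫ z, (ν z).real s ∂ρ = μ.real s := by
    intro s hs
    have hmul : (fun x => s.indicator (1 : (Fin n → ℝ) → ℝ) x * π x) = s.indicator π := by
      funext x
      by_cases hx : x ∈ s <;> simp [hx]
    have h := hνdis (s.indicator 1) (by rw [hmul]; exact hπint.indicator hs)
    rw [hmul] at h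
    simp_rw [integral_indicator_one hs] at h
    rw [h, integral_indicator hs, measureReal_def, hμ, withDensity_apply _ hs,
      integral_eq_lintegral_of_nonneg_ae ((ae_restrict_of_ae hπX).mono fun _ h => h.le)
        hπmeas.aestronglyMeasurable]
  obtain ⟨κ, hκ, hνκ⟩ := exists_isMarkovKernel_ae_eq hνprob' fun s hs =>
    aemeasurable_apply_of_integral_real_eq hνprob' hreal hs
  have hbind : ρ.bind κ = μ := by
    refine bind_eq_of_integral_real_eq fun s hs => ?_
    rw [← hreal s hs]
    refine integral_congr_ae ?_
    filter_upwards [hνκ] with z hz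
    rw [hz]
  have hfib : ∀ᵐ z ∂ρ, ∀ᵐ y ∂κ z, ξ y = z := by
    filter_upwards [hνκ, (ae_restrict_iff' hZ).2 (ae_of_all _ hνconc)] with z hz hz0
    rw [← hz]
    exact hz0
  have hνκξ : ∀ᵐ y ∂μ, ν (ξ y) = κ (ξ y) := by
    rw [← hbind]
    exact ae_comp_of_ae_bind hξmeas hfib hνκ
  set q : (Fin n → ℝ) → (Fin n → ℝ) → ℝ := fun x y => p x y / π y with hqdef
  have hq : Measurable (Function.uncurry q) := hpmeas.div (hπmeas.comp measurable_snd)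
  have hqy : ∀ y, Measurable fun x => q x y := fun y => hq.comp measurable_prodMk_right
  have hqmass : ∫⁻ x, ∫⁻ y, ‖q x y‖ₑ ∂μ ∂μ ≤ 1 := by
    have h : ∀ᵐ x ∂μ, ∫⁻ y, ‖q x y‖ₑ ∂μ ≤ 1 := by
      refine (withDensity_absolutelyContinuous _ _).ae_le ?_
      filter_upwards [ae_restrict_mem hX] with x hx
      have hpx : ∫⁻ y in X, ENNReal.ofReal (p x y) = 1 := by
        rw [← ofReal_integral_eq_lintegral_ofReal (integrable_of_integral_eq_one (hpnorm x hx))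
          (ae_of_all _ (hpnonneg x)), hpnorm x hx, ENNReal.ofReal_one]
      rw [hlint, ← hpx]
      refine lintegral_mono_ae ?_
      filter_upwards [hπX] with y hy
      rw [Real.enorm_eq_ofReal (div_nonneg (hpnonneg x y) hy.le),
        ← ENNReal.ofReal_mul hy.le, mul_div_cancel₀ _ hy.ne']
    calc _ ≤ ∫⁻ _, 1 ∂μ := lintegral_mono_ae h
      _ = 1 := by simp
  have hfin : ∫⁻ z, ∫⁻ y₂, ∫⁻ y₁, ∫⁻ x, ‖q x y₁ - q x y₂‖ₑ ∂μ ∂κ z ∂κ z ∂ρ ≠ ∞ := by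
    refine ((lintegral_oscillation_le hbind hq).trans_lt ?_).ne
    exact ENNReal.mul_lt_top (by simp) (hqmass.trans_lt ENNReal.one_lt_top)
  have hinner : ∀ y₁ y₂, ∫ x in X, |q x y₁ - q x y₂| * π x =
      (∫⁻ x, ‖q x y₁ - q x y₂‖ₑ ∂μ).toReal := by
    intro y₁ y₂
    have hmeas : Measurable fun x => |q x y₁ - q x y₂| * π x :=
      (((hqy y₁).sub (hqy y₂)).abs).mul hπmeas
    rw [hlint, integral_eq_lintegral_of_nonneg_ae
      (hπX.mono fun x hx => mul_nonneg (abs_nonneg _) hx.le) hmeas.aestronglyMeasurable]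
    congr 1
    refine lintegral_congr_ae ?_
    filter_upwards [hπX] with x hx
    rw [ENNReal.ofReal_mul (abs_nonneg _), mul_comm, Real.enorm_eq_ofReal_abs]
  have hRHS : ∫ z in Z, ∫ y₂, ∫ y₁, (∫ x in X, |q x y₁ - q x y₂| * π x) ∂ν z ∂ν z =
      (∫⁻ z, ∫⁻ y₂, ∫⁻ y₁, ∫⁻ x, ‖q x y₁ - q x y₂‖ₑ ∂μ ∂κ z ∂κ z ∂ρ).toReal := by
    rw [← integral_toReal_oscillation_eq hq hfin]
    refine integral_congr_ae ?_
    filter_upwards [hνκ] with z hz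
    simp_rw [hinner, hz]
  have hLHS : ‖∫ x in X, (∫ y in X, |p x y - (∫ y', q x y' ∂ν (ξ y)) * π y|) * π x‖ₑ ≤
      ∫⁻ x, ∫⁻ y, ‖q x y - ∫ y', q x y' ∂κ (ξ y)‖ₑ ∂μ ∂μ := by
    refine (enorm_integral_le_lintegral_enorm _).trans ?_
    rw [hlint]
    refine lintegral_mono_ae ?_
    filter_upwards [hπX] with x hx
    rw [enorm_mul, mul_comm, Real.enorm_eq_ofReal hx.le]
    gcongr
    refine (enorm_integral_le_lintegral_enorm _).trans_eq ?_
    have hswap : ∫⁻ y, ‖q x y - ∫ y', q x y' ∂κ (ξ y)‖ₑ ∂μ =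
        ∫⁻ y, ‖q x y - ∫ y', q x y' ∂ν (ξ y)‖ₑ ∂μ := by
      refine lintegral_congr_ae ?_
      filter_upwards [hνκξ] with y hy
      rw [hy]
    rw [hswap, hlint]
    refine lintegral_congr_ae ?_
    filter_upwards [hπX] with y hy
    rw [← Real.enorm_eq_ofReal hy.le, ← enorm_mul, Real.enorm_abs, mul_sub, hqdef,
      mul_div_cancel₀ _ hy.ne', mul_comm (π y)]
  refine le_trans ?_ hdiff
  gcongr
  refine le_trans ?_ hRHS.ge
  refine (le_abs_self _).trans ?_
  rw [← Real.norm_eq_abs, ← toReal_enorm]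
  exact ENNReal.toReal_mono hfin
    (hLHS.trans (lintegral_enorm_sub_integral_le hbind hξmeas hfib hq))
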